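/- arXiv:1902.07137 — 3 statements merged into one kernel-verified Lean document; each statement's English description precedes it below -/
import Mathlib

section
/- (Cluster characterization, necessary condition.) Let x* = (x_1*,…,x_n*) be the minimizer of the sum-of-norms clustering objective with parameter λ > 0, and let C be a nonempty subset of {1,…,n}. If there exists x̂ ∈ ℝ^d such that x_i* = x̂ for all i ∈ C and x_i* ≠ x̂ for all i ∉ C (i.e., C is exactly one cluster), then there exist vectors z_ij* ∈ ℝ^d for i, j ∈ C with i ≠ j such that: a_i − (1/|C|)·Σ_{l∈C} a_l = λ·Σ_{j∈C∖{i}} z_ij* for all i ∈ C; ‖z_ij*‖ ≤ 1 for all i ≠ j in C; and z_ij* = −z_ji* for all i ≠ j in C. -/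
open Finset

/-- The sum-of-norms clustering objective. -/
noncomputable def sonObjective {d n : ℕ} (a : Fin n → EuclideanSpace ℝ (Fin d)) (lam : ℝ)
    (x : Fin n → EuclideanSpace ℝ (Fin d)) : ℝ :=
  (1 / 2) * ∑ i, ‖x i - a i‖ ^ 2 + lam * ∑ i, ∑ j, if i < j then ‖x i - x j‖ else 0

/-!
At a minimizer `x` the one-sided directional derivatives of the objective are nonnegative. A pair
with `x i ≠ x j` contributes linearly to the derivative in direction `h`, a pair with `x i = x j`
contributes `λ ‖h i - h j‖`. Hence the functional `h ↦ ∑ i, ⟪g i, h i⟫`, where `-g` is the gradient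
of the differentiable part, is dominated by the weighted `ℓ¹` norm of the family of differences
`h i - h j` over these latter pairs. It therefore factors through that family, and a Hahn–Banach
extension to all families indexed by pairs has the multipliers as its components. Within one
cluster the remaining gradient terms are the same for all indices, and averaging over the cluster,
where the antisymmetric multipliers cancel, identifies them.
-/

open NormedSpace (normalize)
open scoped InnerProductSpace

section HahnBanach

lemma exists_comp_eq_of_le_sublinear {V W : Type*} [AddCommGroup V] [Module ℝ V]
    [AddCommGroup W] [Module ℝ W] (D : V →ₗ[ℝ] W) (φ : V →ₗ[ℝ] ℝ) (N : W → ℝ)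
    (N_hom : ∀ c : ℝ, 0 < c → ∀ w, N (c • w) = c * N w)
    (N_add : ∀ w w', N (w + w') ≤ N w + N w') (hφ : ∀ v, φ v ≤ N (D v)) :
    ∃ ψ : W →ₗ[ℝ] ℝ, (∀ v, ψ (D v) = φ v) ∧ ∀ w, ψ w ≤ N w := by
  obtain ⟨s, hs⟩ := D.rangeRestrict.exists_rightInverse_of_surjective D.range_rangeRestrict
  have D_s (w : D.range) : D (s w) = w := congrArg Subtype.val (LinearMap.congr_fun hs w)
  have N_zero : N 0 = 0 := by
    have := N_hom 2 two_pos 0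
    rw [smul_zero] at this
    linarith
  have φ_le_of_D_eq {v v' : V} (h : D v = D v') : φ v ≤ φ v' := by
    have := hφ (v - v')
    rw [map_sub, map_sub, h, sub_self, N_zero] at this
    linarith
  obtain ⟨ψ, hψ, hψN⟩ := exists_extension_of_le_sublinear ⟨D.range, φ ∘ₗ s⟩ N N_hom N_add
    fun w ↦ (hφ (s w)).trans_eq (congrArg N (D_s w))
  refine ⟨ψ, fun v ↦ (hψ ⟨D v, v, rfl⟩).trans ?_, hψN⟩
  have D_s_v := D_s ⟨D v, v, rfl⟩
  exact le_antisymm (φ_le_of_D_eq D_s_v) (φ_le_of_D_eq D_s_v.symm)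

variable {E : Type*} [SeminormedAddCommGroup E] [NormedSpace ℝ E]

lemma exists_dual_family_of_le_sum_norm {V κ : Type*} [AddCommGroup V] [Module ℝ V] [Fintype κ]
    (D : V →ₗ[ℝ] κ → E) (φ : V →ₗ[ℝ] ℝ) (w : κ → ℝ) (hw : ∀ k, 0 ≤ w k)
    (hφ : ∀ v, φ v ≤ ∑ k, w k * ‖D v k‖) :
    ∃ ζ : κ → StrongDual ℝ E, (∀ k, ‖ζ k‖ ≤ w k) ∧ ∀ v, φ v = ∑ k, ζ k (D v k) := by
  classical
  obtain ⟨ψ, hψD, hψ⟩ := exists_comp_eq_of_le_sublinear D φ (fun e ↦ ∑ k, w k * ‖e k‖)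
    (fun c hc e ↦ by
      simp only [Pi.smul_apply, norm_smul, Real.norm_of_nonneg hc.le, mul_sum, mul_left_comm])
    (fun e e' ↦ by
      simp only [← sum_add_distrib, ← mul_add]
      exact sum_le_sum fun k _ ↦ mul_le_mul_of_nonneg_left (norm_add_le _ _) (hw k)) hφ
  have component_le (k : κ) (e : E) : ψ (Pi.single k e) ≤ w k * ‖e‖ := by
    refine (hψ _).trans_eq ((sum_eq_single k (fun l _ hl ↦ ?_) (by simp)).trans ?_)
    · rw [Pi.single_eq_of_ne hl, norm_zero, mul_zero]
    · rw [Pi.single_eq_same]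
  have abs_component_le (k : κ) (e : E) :
      ‖(ψ ∘ₗ LinearMap.single ℝ (fun _ ↦ E) k) e‖ ≤ w k * ‖e‖ := by
    refine abs_le'.2 ⟨component_le k e, ?_⟩
    simpa [Pi.single_neg] using component_le k (-e)
  refine ⟨fun k ↦ LinearMap.mkContinuous _ (w k) (abs_component_le k),
    fun k ↦ LinearMap.mkContinuous_norm_le _ (hw k) _, fun v ↦ ?_⟩
  rw [← hψD, ← univ_sum_single (D v), map_sum]
  simp

end HahnBanach

section PairSums

variable {ι : Type*}

lemma sum_sum_eq_zero_of_antisymm {G : Type*} [AddCommGroup G] [IsAddTorsionFree G]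
    {z : ι → ι → G} (hz : ∀ i j, z i j = -z j i) (C : Finset ι) :
    ∑ i ∈ C, ∑ j ∈ C, z i j = 0 := by
  refine self_eq_neg.1 ?_
  calc ∑ i ∈ C, ∑ j ∈ C, z i j = ∑ i ∈ C, ∑ j ∈ C, z j i := sum_comm
    _ = -∑ i ∈ C, ∑ j ∈ C, z i j := by
      simp only [← sum_neg_distrib]
      exact sum_congr rfl fun i _ ↦ sum_congr rfl fun j _ ↦ hz j i

lemma inv_card_smul_sum_eq_of_antisymm {K E : Type*} [Field K] [CharZero K] [AddCommGroup E]
    [Module K E] {C : Finset ι} (hC : C.Nonempty) {a : ι → E} {b : E} {c : K} {z : ι → ι → E}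
    (hz : ∀ i j, z i j = -z j i) (ha : ∀ i ∈ C, a i = b + c • ∑ j ∈ C, z i j) :
    (#C : K)⁻¹ • ∑ i ∈ C, a i = b := by
  have : IsAddTorsionFree E := .of_isTorsionFree K E
  have hcard : (#C : K) ≠ 0 := Nat.cast_ne_zero.2 hC.card_ne_zero
  rw [sum_congr rfl ha, sum_add_distrib, ← smul_sum, sum_sum_eq_zero_of_antisymm hz, smul_zero,
    add_zero, sum_const, ← Nat.cast_smul_eq_nsmul K, inv_smul_smul₀ hcard]

variable [Fintype ι]

lemma sum_sum_apply_sub {E : Type*} [AddCommGroup E] [Module ℝ E] [TopologicalSpace E]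
    (ζ : ι → ι → StrongDual ℝ E) (h : ι → E) :
    ∑ i, ∑ j, ζ i j (h i - h j) = ∑ i, ∑ j, (ζ i j - ζ j i) (h i) := by
  simp only [map_sub, sub_apply, sum_sub_distrib]
  rw [sum_comm (f := fun i j ↦ ζ i j (h j))]

lemma exists_antisymm_dual_of_le_sum_norm_sub {E : Type*} [SeminormedAddCommGroup E]
    [NormedSpace ℝ E] (g : ι → StrongDual ℝ E) (w : ι → ι → ℝ) (hw : ∀ i j, 0 ≤ w i j)
    (w_symm : ∀ i j, w i j = w j i)
    (hg : ∀ h : ι → E, 2 * ∑ i, g i (h i) ≤ ∑ i, ∑ j, w i j * ‖h i - h j‖) :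
    ∃ z : ι → ι → StrongDual ℝ E,
      (∀ i j, z i j = -z j i) ∧ (∀ i j, ‖z i j‖ ≤ w i j) ∧ ∀ i, g i = ∑ j, z i j := by
  classical
  let D : (ι → E) →ₗ[ℝ] ι × ι → E := LinearMap.pi fun p ↦ .proj p.1 - .proj p.2
  let φ : (ι → E) →ₗ[ℝ] ℝ := (2 : ℝ) • ∑ i, (g i).toLinearMap ∘ₗ LinearMap.proj i
  have φ_apply (h : ι → E) : φ h = 2 * ∑ i, g i (h i) := by simp [φ]
  obtain ⟨ζ, ζ_le, hζ⟩ := exists_dual_family_of_le_sum_norm D φ (fun p ↦ w p.1 p.2)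
    (fun p ↦ hw p.1 p.2) fun h ↦ by simpa [φ_apply, Fintype.sum_prod_type, D] using hg h
  let z (i j : ι) : StrongDual ℝ E := (2 : ℝ)⁻¹ • (ζ (i, j) - ζ (j, i))
  have sum_apply_eq (h : ι → E) : ∑ i, g i (h i) = ∑ i, (∑ j, z i j) (h i) := by
    have h_swap : φ h = ∑ i, ∑ j, (ζ (i, j) - ζ (j, i)) (h i) := by
      rw [hζ, Fintype.sum_prod_type]
      exact sum_sum_apply_sub (fun i j ↦ ζ (i, j)) h
    simp only [z, ← smul_sum, smul_apply, _root_.sum_apply, smul_eq_mul, ← mul_sum]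
    rw [← h_swap, φ_apply, inv_mul_cancel_left₀ two_ne_zero]
  refine ⟨z, fun i j ↦ ?_, fun i j ↦ ?_, fun i ↦ ?_⟩
  · simp only [z]
    module
  · have := (norm_sub_le _ _).trans (add_le_add (ζ_le (i, j)) (ζ_le (j, i)))
    rw [norm_smul, norm_inv, Real.norm_two, inv_mul_le_iff₀ two_pos]
    linarith [w_symm i j]
  · ext e
    have map_single (f : ι → StrongDual ℝ E) : ∑ k, f k ((Pi.single i e : ι → E) k) = f i e := by
      simp [Pi.apply_single (fun k ↦ f k)]
    rw [← map_single g, sum_apply_eq, map_single fun k ↦ ∑ j, z k j]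

variable {E : Type*} [NormedAddCommGroup E] [InnerProductSpace ℝ E]

lemma exists_antisymm_of_le_sum_norm_sub [CompleteSpace E] (g : ι → E) (w : ι → ι → ℝ)
    (hw : ∀ i j, 0 ≤ w i j) (w_symm : ∀ i j, w i j = w j i)
    (hg : ∀ h : ι → E, 2 * ∑ i, ⟪g i, h i⟫_ℝ ≤ ∑ i, ∑ j, w i j * ‖h i - h j‖) :
    ∃ z : ι → ι → E,
      (∀ i j, z i j = -z j i) ∧ (∀ i j, ‖z i j‖ ≤ w i j) ∧ ∀ i, g i = ∑ j, z i j := by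
  obtain ⟨z, z_antisymm, z_le, hz⟩ := exists_antisymm_dual_of_le_sum_norm_sub
    (fun i ↦ InnerProductSpace.toDual ℝ E (g i)) w hw w_symm hg
  refine ⟨fun i j ↦ (InnerProductSpace.toDual ℝ E).symm (z i j), fun i j ↦ ?_, fun i j ↦ ?_,
    fun i ↦ ?_⟩
  · simp only [z_antisymm i j, map_neg]
  · rw [LinearIsometryEquiv.norm_map]
    exact z_le i j
  · rw [← map_sum, ← hz, LinearIsometryEquiv.symm_apply_apply]

lemma sum_sum_inner_sub_of_antisymm {z : ι → ι → E} (hz : ∀ i j, z i j = -z j i) (h : ι → E) :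
    ∑ i, ∑ j, ⟪z i j, h i - h j⟫_ℝ = 2 * ∑ i, ⟪∑ j, z i j, h i⟫_ℝ := by
  calc ∑ i, ∑ j, ⟪z i j, h i - h j⟫_ℝ = ∑ i, ∑ j, ⟪z i j - z j i, h i⟫_ℝ := by
        simpa [inner_sub_left] using sum_sum_apply_sub (fun i j ↦ innerSL ℝ (z i j)) h
    _ = 2 * ∑ i, ⟪∑ j, z i j, h i⟫_ℝ := by
      simp only [mul_sum, sum_inner, ← real_inner_smul_left, two_smul, sub_eq_add_neg, ← hz]

lemma sum_sum_eq_two_mul_sum_sum_lt {R : Type*} [NonAssocSemiring R] [LinearOrder ι]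
    {f : ι → ι → R} (f_symm : ∀ i j, f i j = f j i) (f_diag : ∀ i, f i i = 0) :
    ∑ i, ∑ j, f i j = 2 * ∑ i, ∑ j, if i < j then f i j else 0 := by
  have split (i j : ι) : f i j = (if i < j then f i j else 0) + if j < i then f j i else 0 := by
    rcases lt_trichotomy i j with h | rfl | h
    · simp [h, h.not_gt]
    · simp [f_diag]
    · simp [h, h.not_gt, f_symm i j]
  rw [sum_congr rfl fun i _ ↦ sum_congr rfl fun j _ ↦ split i j]
  simp only [sum_add_distrib]
  rw [sum_comm (f := fun i j ↦ if j < i then f j i else 0), two_mul]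

end PairSums

section RightDerivative

lemma hasDerivWithinAt_Ici_nonneg_of_isLocalMinOn {f : ℝ → ℝ} {f' t : ℝ}
    (hf : HasDerivWithinAt f f' (Set.Ici t) t) (hmin : IsLocalMinOn f (Set.Ici t) t) :
    0 ≤ f' := by
  have one_mem : (1 : ℝ) ∈ posTangentConeAt (Set.Ici t) t := by
    rw [one_mem_posTangentConeAt_iff_mem_closure, Set.inter_eq_left.2 Set.Ioi_subset_Ici_self,
      closure_Ioi]
    exact Set.self_mem_Ici
  simpa using hmin.hasFDerivWithinAt_nonneg hf.hasFDerivWithinAt one_mem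

variable {E : Type*} [NormedAddCommGroup E] [InnerProductSpace ℝ E]

lemma hasDerivAt_add_smul_zero (u v : E) : HasDerivAt (fun t : ℝ ↦ u + t • v) v 0 := by
  simpa using ((hasDerivAt_id (0 : ℝ)).smul_const v).const_add u

open scoped Classical in
/-- The first summand vanishes at `u = 0`, where `normalize u = 0`. -/
lemma hasDerivWithinAt_norm_add_smul (u v : E) :
    HasDerivWithinAt (fun t : ℝ ↦ ‖u + t • v‖)
      (⟪normalize u, v⟫_ℝ + if u = 0 then ‖v‖ else 0) (Set.Ici 0) 0 := by
  by_cases hu : u = 0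
  · subst hu
    have h_linear : HasDerivWithinAt (fun t : ℝ ↦ t * ‖v‖) ‖v‖ (Set.Ici 0) 0 := by
      simpa using ((hasDerivAt_id (0 : ℝ)).mul_const ‖v‖).hasDerivWithinAt
    simp only [NormedSpace.normalize_zero_eq_zero, inner_zero_left, if_true, zero_add]
    refine h_linear.congr (fun t ht ↦ ?_) (by simp)
    rw [norm_smul, Real.norm_of_nonneg ht]
  · have h_sqrt := (hasDerivAt_add_smul_zero u v).norm_sq.sqrt (by simpa using hu)
    simp only [Real.sqrt_sq (norm_nonneg _)] at h_sqrt
    refine h_sqrt.hasDerivWithinAt.congr_deriv ?_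
    simp only [zero_smul, add_zero, hu, if_false, NormedSpace.normalize, real_inner_smul_left]
    field_simp

end RightDerivative

section SumOfNorms

variable {ι E : Type*} [Fintype ι] [NormedAddCommGroup E] [InnerProductSpace ℝ E]

/-- The sum-of-norms clustering objective for finitely many points of an inner product space.
Every unordered pair occurs twice in the double sum, whence the factor `lam / 2`. -/
noncomputable def sumOfNorms (a : ι → E) (lam : ℝ) (x : ι → E) : ℝ :=
  (1 / 2) * ∑ i, ‖x i - a i‖ ^ 2 + lam / 2 * ∑ i, ∑ j, ‖x i - x j‖

lemma sonObjective_eq_sumOfNorms {d n : ℕ} (a : Fin n → EuclideanSpace ℝ (Fin d)) (lam : ℝ) :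
    sonObjective a lam = sumOfNorms a lam := by
  ext x
  rw [sonObjective, sumOfNorms,
    sum_sum_eq_two_mul_sum_sum_lt (fun i j ↦ norm_sub_rev (x i) (x j)) (by simp)]
  ring

/-- The negative gradient at `x` of the part of `sumOfNorms a lam` that is differentiable there,
obtained by leaving out the pairs with `x i = x j`; these contribute `normalize 0 = 0`. -/
noncomputable def smoothResidual (a : ι → E) (lam : ℝ) (x : ι → E) (i : ι) : E :=
  a i - x i - lam • ∑ j, normalize (x i - x j)

variable {a : ι → E} {lam : ℝ} {x : ι → E}

open scoped Classical in
lemma hasDerivWithinAt_sumOfNorms_add_smul (h : ι → E) :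
    HasDerivWithinAt (fun t : ℝ ↦ sumOfNorms a lam (x + t • h))
      (lam / 2 * (∑ i, ∑ j, if x i = x j then ‖h i - h j‖ else 0) -
        ∑ i, ⟪smoothResidual a lam x i, h i⟫_ℝ) (Set.Ici 0) 0 := by
  have h_sq (i : ι) : HasDerivWithinAt (fun t : ℝ ↦ ‖(x + t • h) i - a i‖ ^ 2)
      (2 * ⟪x i - a i, h i⟫_ℝ) (Set.Ici 0) 0 := by
    simpa [add_sub_right_comm] using
      (hasDerivAt_add_smul_zero (x i - a i) (h i)).norm_sq.hasDerivWithinAt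
  have h_norm (i j : ι) : HasDerivWithinAt (fun t : ℝ ↦ ‖(x + t • h) i - (x + t • h) j‖)
      (⟪normalize (x i - x j), h i - h j⟫_ℝ + if x i = x j then ‖h i - h j‖ else 0)
      (Set.Ici 0) 0 := by
    simpa [smul_sub, add_sub_add_comm, sub_eq_zero] using
      hasDerivWithinAt_norm_add_smul (x i - x j) (h i - h j)
  have normalize_antisymm (i j : ι) : normalize (x i - x j) = -normalize (x j - x i) := by
    rw [← NormedSpace.normalize_neg, neg_sub]
  refine (((HasDerivWithinAt.fun_sum fun i _ ↦ h_sq i).const_mul (1 / 2)).add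
    ((HasDerivWithinAt.fun_sum fun i _ ↦ HasDerivWithinAt.fun_sum fun j _ ↦
      h_norm i j).const_mul (lam / 2))).congr_deriv ?_
  simp only [sum_add_distrib, sum_sum_inner_sub_of_antisymm normalize_antisymm, smoothResidual,
    inner_sub_left, sum_sub_distrib, real_inner_smul_left, ← mul_sum]
  ring

open scoped Classical in
lemma two_mul_sum_inner_smoothResidual_le (hx : IsLocalMin (sumOfNorms a lam) x) (h : ι → E) :
    2 * ∑ i, ⟪smoothResidual a lam x i, h i⟫_ℝ ≤
      lam * ∑ i, ∑ j, if x i = x j then ‖h i - h j‖ else 0 := by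
  have hmin : IsLocalMin (sumOfNorms a lam ∘ fun t : ℝ ↦ x + t • h) 0 :=
    IsLocalMin.comp_continuous (by simpa using hx) (by fun_prop)
  linarith [hasDerivWithinAt_Ici_nonneg_of_isLocalMinOn (hasDerivWithinAt_sumOfNorms_add_smul h)
    (hmin.on _)]

lemma smoothResidual_eq_zero_of_nonpos (hlam : lam ≤ 0) (hx : IsLocalMin (sumOfNorms a lam) x)
    (i : ι) : smoothResidual a lam x i = 0 := by
  classical
  have h_nonpos : ∑ i, ‖smoothResidual a lam x i‖ ^ 2 ≤ 0 := by
    have h_test := two_mul_sum_inner_smoothResidual_le hx (smoothResidual a lam x)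
    simp only [real_inner_self_eq_norm_sq] at h_test
    have h_pairs : 0 ≤ ∑ i, ∑ j, if x i = x j then
        ‖smoothResidual a lam x i - smoothResidual a lam x j‖ else 0 :=
      sum_nonneg fun i _ ↦ sum_nonneg fun j _ ↦ by positivity
    nlinarith
  have h_sum := le_antisymm h_nonpos (sum_nonneg fun i _ ↦ sq_nonneg _)
  simpa using (sum_eq_zero_iff_of_nonneg fun i _ ↦ sq_nonneg _).1 h_sum i (mem_univ i)

open scoped Classical in
theorem exists_multiplier_of_isLocalMin [CompleteSpace E]
    (hx : IsLocalMin (sumOfNorms a lam) x) :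
    ∃ z : ι → ι → E, (∀ i j, z i j = -z j i) ∧
      (∀ i j, ‖z i j‖ ≤ if x i = x j then 1 else 0) ∧
      ∀ i, smoothResidual a lam x i = lam • ∑ j, z i j := by
  have weight_nonneg (i j : ι) : (0 : ℝ) ≤ if x i = x j then 1 else 0 := by positivity
  rcases le_or_gt lam 0 with hlam | hlam
  · refine ⟨0, by simp, by simpa using weight_nonneg, fun i ↦ ?_⟩
    simp [smoothResidual_eq_zero_of_nonpos hlam hx i]
  · obtain ⟨z, z_antisymm, z_le, hz⟩ := exists_antisymm_of_le_sum_norm_sub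
      (fun i ↦ lam⁻¹ • smoothResidual a lam x i) (fun i j ↦ if x i = x j then 1 else 0)
      weight_nonneg (fun i j ↦ by simp only [eq_comm]) fun h ↦ by
        simp only [real_inner_smul_left, ← mul_sum, ite_mul, one_mul, zero_mul]
        rw [mul_left_comm, inv_mul_le_iff₀ hlam]
        exact two_mul_sum_inner_smoothResidual_le hx h
    exact ⟨z, z_antisymm, z_le, fun i ↦ by rw [← hz, smul_inv_smul₀ hlam.ne']⟩

theorem cluster_characterization_necessary_general [DecidableEq ι] [CompleteSpace E]
    (hx : IsLocalMin (sumOfNorms a lam) x) (C : Finset ι) (xhat : E)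
    (hin : ∀ i ∈ C, x i = xhat) (hout : ∀ i ∉ C, x i ≠ xhat) :
    ∃ z : ι → ι → E,
      (∀ i ∈ C, a i - (#C : ℝ)⁻¹ • ∑ l ∈ C, a l = lam • ∑ j ∈ C.erase i, z i j) ∧
      (∀ i ∈ C, ∀ j ∈ C, i ≠ j → ‖z i j‖ ≤ 1) ∧
      (∀ i ∈ C, ∀ j ∈ C, i ≠ j → z i j = -z j i) := by
  obtain ⟨z, z_antisymm, z_le, hz⟩ := exists_multiplier_of_isLocalMin hx
  have sum_eq_sum_cluster {i : ι} (hi : i ∈ C) : ∑ j, z i j = ∑ j ∈ C, z i j := by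
    refine (sum_subset (subset_univ C) fun j _ hj ↦ norm_le_zero_iff.1 ?_).symm
    simpa [hin i hi, (hout j hj).symm] using z_le i j
  have cluster_eq {i : ι} (hi : i ∈ C) :
      a i = (xhat + lam • ∑ j, normalize (xhat - x j)) + lam • ∑ j ∈ C, z i j := by
    rw [← sum_eq_sum_cluster hi, ← hz, smoothResidual, hin i hi]
    abel
  refine ⟨z, fun i hi ↦ ?_, fun i hi j hj _ ↦ ?_, fun i _ j _ _ ↦ z_antisymm i j⟩
  · have : IsAddTorsionFree E := .of_isTorsionFree ℝ E
    rw [inv_card_smul_sum_eq_of_antisymm ⟨i, hi⟩ z_antisymm fun _ ↦ cluster_eq,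
      sum_erase C (self_eq_neg.1 (z_antisymm i i)), cluster_eq hi, add_sub_cancel_left]
  · simpa [hin i hi, hin j hj] using z_le i j

end SumOfNorms

/-- Cluster characterization, necessary condition (Chiquet et al.): if `C` is exactly
one cluster of the minimizer, then the multiplier system is solvable. -/
theorem cluster_characterization_necessary
    (d n : ℕ) (a : Fin n → EuclideanSpace ℝ (Fin d)) (lam : ℝ) (hlam : 0 < lam)
    (x : Fin n → EuclideanSpace ℝ (Fin d))
    (hx : ∀ y : Fin n → EuclideanSpace ℝ (Fin d), sonObjective a lam x ≤ sonObjective a lam y)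
    (C : Finset (Fin n)) (hC : C.Nonempty) (xhat : EuclideanSpace ℝ (Fin d))
    (hin : ∀ i ∈ C, x i = xhat) (hout : ∀ i ∉ C, x i ≠ xhat) :
    ∃ z : Fin n → Fin n → EuclideanSpace ℝ (Fin d),
      (∀ i ∈ C, a i - (C.card : ℝ)⁻¹ • ∑ l ∈ C, a l = lam • ∑ j ∈ C.erase i, z i j) ∧
      (∀ i ∈ C, ∀ j ∈ C, i ≠ j → ‖z i j‖ ≤ 1) ∧
      (∀ i ∈ C, ∀ j ∈ C, i ≠ j → z i j = -z j i) :=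
  cluster_characterization_necessary_general
    (sonObjective_eq_sumOfNorms a lam ▸ Filter.Eventually.of_forall hx) C xhat hin hout
end

section
/- (Diameter criterion for a cluster.) Let λ > 0 and let C ⊆ {1,…,n} be nonempty. If ‖a_i − a_j‖ ≤ λ·|C| for all i, j ∈ C, then there exists x̂ ∈ ℝ^d such that the minimizer x* = (x_1*,…,x_n*) of the sum-of-norms clustering objective satisfies x_i* = x̂ for all i ∈ C; that is, all points of C lie in the same cluster. -/
open Finset

/-!
Move every `x i` with `i ∈ C` to the centroid `m` of these points. By the triangle inequality the
penalty drops by at least `lam / 2 * ∑ i ∈ C, ∑ j ∈ C, ‖x i - x j‖`, while the fidelity term grows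
by `∑ i ∈ C, ⟪x i - m, a i⟫ - 1 / 2 * ∑ i ∈ C, ‖x i - m‖ ^ 2`. Symmetrized over pairs, the sum of
inner products is `1 / (2 * #C) * ∑ i ∈ C, ∑ j ∈ C, ⟪x i - x j, a i - a j⟫`, so by Cauchy–Schwarz
and the diameter bound it is at most the drop of the penalty. The objective therefore decreases by
at least `1 / 2 * ∑ i ∈ C, ‖x i - m‖ ^ 2`, which must vanish at a minimizer.
-/

section SymmetricSums

variable {ι M : Type*} [AddCommMonoid M] {f : ι → ι → M}

lemma two_nsmul_sum_sum_ite_lt [LinearOrder ι] (s : Finset ι) (hsymm : ∀ i j, f i j = f j i)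
    (hdiag : ∀ i, f i i = 0) :
    2 • ∑ i ∈ s, ∑ j ∈ s, (if i < j then f i j else 0) = ∑ i ∈ s, ∑ j ∈ s, f i j := by
  have hswap : ∑ i ∈ s, ∑ j ∈ s, (if i < j then f i j else 0) =
      ∑ i ∈ s, ∑ j ∈ s, (if j < i then f i j else 0) := by
    rw [sum_comm]
    simp only [hsymm]
  rw [two_nsmul]
  nth_rewrite 2 [hswap]
  simp only [← sum_add_distrib]
  refine sum_congr rfl fun i _ ↦ sum_congr rfl fun j _ ↦ ?_
  rcases lt_trichotomy i j with hij | rfl | hij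
  · simp [hij, hij.not_gt]
  · simp [hdiag]
  · simp [hij, hij.not_gt]

lemma sum_sum_eq_add_two_nsmul_add_compl [Fintype ι] [DecidableEq ι] (s : Finset ι)
    (hsymm : ∀ i j, f i j = f j i) :
    ∑ i, ∑ j, f i j =
      ∑ i ∈ s, ∑ j ∈ s, f i j + 2 • ∑ j ∈ sᶜ, ∑ i ∈ s, f i j + ∑ i ∈ sᶜ, ∑ j ∈ sᶜ, f i j := by
  have hcross : ∑ i ∈ sᶜ, ∑ j ∈ s, f i j = ∑ j ∈ sᶜ, ∑ i ∈ s, f i j :=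
    sum_congr rfl fun i _ ↦ sum_congr rfl fun j _ ↦ hsymm i j
  rw [← sum_add_sum_compl s]
  simp only [← sum_add_sum_compl s (f _), sum_add_distrib]
  rw [hcross, sum_comm (s := s) (t := sᶜ), two_nsmul]
  abel

end SymmetricSums

section Centroid

variable {ι : Type*} (s : Finset ι)

lemma sum_sub_centroid_eq_zero {k V : Type*} [DivisionRing k] [CharZero k] [AddCommGroup V]
    [Module k V] (x : ι → V) : ∑ i ∈ s, (x i - s.centroid k x) = 0 := by
  rcases s.eq_empty_or_nonempty with rfl | hs
  · exact sum_empty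
  · have hcard : (#s : k) ≠ 0 := Nat.cast_ne_zero.2 hs.card_ne_zero
    have hweights : ∑ i ∈ s, s.centroidWeights k i = 1 :=
      s.sum_centroidWeights_eq_one_of_nonempty k hs
    rw [sum_sub_distrib, sum_const, ← Nat.cast_smul_eq_nsmul k, centroid_def,
      affineCombination_eq_linear_combination _ _ _ hweights]
    simp only [centroidWeights_apply, ← smul_sum, smul_inv_smul₀ hcard, sub_self]

lemma card_mul_norm_centroid_sub_le {E : Type*} [SeminormedAddCommGroup E] [NormedSpace ℝ E]
    (x : ι → E) (z : E) : #s * ‖s.centroid ℝ x - z‖ ≤ ∑ i ∈ s, ‖x i - z‖ := by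
  have hsum : ∑ i ∈ s, (x i - z) = #s • (s.centroid ℝ x - z) := by
    rw [← sum_const, ← sub_eq_zero, ← sum_sub_distrib]
    simpa only [sub_sub_sub_cancel_right] using sum_sub_centroid_eq_zero s x
  calc #s * ‖s.centroid ℝ x - z‖ = ‖∑ i ∈ s, (x i - z)‖ := by
        rw [hsum, ← Nat.cast_smul_eq_nsmul ℝ, norm_smul, Real.norm_natCast]
    _ ≤ ∑ i ∈ s, ‖x i - z‖ := norm_sum_le _ _

variable {E : Type*} [SeminormedAddCommGroup E] [InnerProductSpace ℝ E] (x a : ι → E)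

lemma sum_inner_sub_centroid_left (z : E) :
    ∑ i ∈ s, inner ℝ (x i - s.centroid ℝ x) z = 0 := by
  rw [← sum_inner, sum_sub_centroid_eq_zero, inner_zero_left]

lemma sum_norm_sub_sq_eq_centroid :
    ∑ i ∈ s, ‖x i - a i‖ ^ 2 = ∑ i ∈ s, ‖s.centroid ℝ x - a i‖ ^ 2
      + ∑ i ∈ s, ‖x i - s.centroid ℝ x‖ ^ 2
      - 2 * ∑ i ∈ s, inner ℝ (x i - s.centroid ℝ x) (a i) := by
  set m := s.centroid ℝ x
  have hterm (i : ι) : ‖x i - a i‖ ^ 2 = ‖m - a i‖ ^ 2 + ‖x i - m‖ ^ 2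
      - 2 * inner ℝ (x i - m) (a i) + 2 * inner ℝ (x i - m) m := by
    rw [← sub_add_sub_cancel (x i) m (a i), norm_add_sq_real, inner_sub_right]
    ring
  simp only [hterm, sum_add_distrib, sum_sub_distrib, ← mul_sum]
  rw [sum_inner_sub_centroid_left, mul_zero, add_zero]

lemma sum_sum_inner_sub_sub :
    ∑ i ∈ s, ∑ j ∈ s, inner ℝ (x i - x j) (a i - a j) =
      2 * #s * ∑ i ∈ s, inner ℝ (x i - s.centroid ℝ x) (a i) := by
  set m := s.centroid ℝ x
  have hterm (i j : ι) : inner ℝ (x i - x j) (a i - a j) =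
      inner ℝ (x i - m) (a i) - inner ℝ (x i - m) (a j)
        + (inner ℝ (x j - m) (a j) - inner ℝ (x j - m) (a i)) := by
    rw [← sub_sub_sub_cancel_right (x i) (x j) m, inner_sub_left, inner_sub_right, inner_sub_right]
    ring
  have hcross : ∑ i ∈ s, ∑ j ∈ s, inner ℝ (x j - m) (a i) = 0 :=
    sum_eq_zero fun i _ ↦ sum_inner_sub_centroid_left s x (a i)
  have hcross' : ∑ i ∈ s, ∑ j ∈ s, inner ℝ (x i - m) (a j) = 0 := by
    rw [sum_comm, hcross]
  simp only [hterm, sum_add_distrib, sum_sub_distrib, hcross, hcross', sum_const, nsmul_eq_mul,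
    ← mul_sum]
  ring

variable {s a} in
lemma two_mul_sum_inner_sub_centroid_le {r : ℝ}
    (hdiam : ∀ i ∈ s, ∀ j ∈ s, ‖a i - a j‖ ≤ r * #s) :
    2 * ∑ i ∈ s, inner ℝ (x i - s.centroid ℝ x) (a i) ≤ r * ∑ i ∈ s, ∑ j ∈ s, ‖x i - x j‖ := by
  rcases s.eq_empty_or_nonempty with rfl | hs
  · simp
  have hcard : (0 : ℝ) < #s := Nat.cast_pos.2 hs.card_pos
  refine le_of_mul_le_mul_left ?_ hcard
  calc #s * (2 * ∑ i ∈ s, inner ℝ (x i - s.centroid ℝ x) (a i))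
      = ∑ i ∈ s, ∑ j ∈ s, inner ℝ (x i - x j) (a i - a j) := by
        rw [sum_sum_inner_sub_sub]
        ring
    _ ≤ ∑ i ∈ s, ∑ j ∈ s, ‖x i - x j‖ * (r * #s) := by
        refine sum_le_sum fun i hi ↦ sum_le_sum fun j hj ↦ (real_inner_le_norm _ _).trans ?_
        exact mul_le_mul_of_nonneg_left (hdiam i hi j hj) (norm_nonneg _)
    _ = #s * (r * ∑ i ∈ s, ∑ j ∈ s, ‖x i - x j‖) := by
        simp only [← sum_mul]
        ring

end Centroid

section Fuse

variable {ι E : Type*} [DecidableEq ι]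

/-- The configuration obtained from `x` by moving all points with index in `C` to their centroid;
it is the competitor against which a minimizer of the clustering objective is tested. -/
noncomputable def fuse [AddCommGroup E] [Module ℝ E] (C : Finset ι) (x : ι → E) : ι → E :=
  C.piecewise (fun _ ↦ C.centroid ℝ x) x

lemma fuse_of_mem [AddCommGroup E] [Module ℝ E] {C : Finset ι} {i : ι} (hi : i ∈ C)
    (x : ι → E) : fuse C x i = C.centroid ℝ x :=
  C.piecewise_eq_of_mem _ _ hi

lemma fuse_of_notMem [AddCommGroup E] [Module ℝ E] {C : Finset ι} {i : ι} (hi : i ∉ C)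
    (x : ι → E) : fuse C x i = x i :=
  C.piecewise_eq_of_notMem _ _ hi

variable [Fintype ι] [SeminormedAddCommGroup E] (C : Finset ι)

lemma sum_sum_norm_fuse_sub_add_le [NormedSpace ℝ E] (x : ι → E) :
    ∑ i, ∑ j, ‖fuse C x i - fuse C x j‖ + ∑ i ∈ C, ∑ j ∈ C, ‖x i - x j‖ ≤
      ∑ i, ∑ j, ‖x i - x j‖ := by
  have hinside : ∑ i ∈ C, ∑ j ∈ C, ‖fuse C x i - fuse C x j‖ = 0 :=
    sum_eq_zero fun i hi ↦ sum_eq_zero fun j hj ↦ by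
      rw [fuse_of_mem hi, fuse_of_mem hj, sub_self, norm_zero]
  have houtside : ∑ i ∈ Cᶜ, ∑ j ∈ Cᶜ, ‖fuse C x i - fuse C x j‖ =
      ∑ i ∈ Cᶜ, ∑ j ∈ Cᶜ, ‖x i - x j‖ :=
    sum_congr rfl fun i hi ↦ sum_congr rfl fun j hj ↦ by
      rw [fuse_of_notMem (mem_compl.1 hi), fuse_of_notMem (mem_compl.1 hj)]
  have hcross : ∑ j ∈ Cᶜ, ∑ i ∈ C, ‖fuse C x i - fuse C x j‖ ≤
      ∑ j ∈ Cᶜ, ∑ i ∈ C, ‖x i - x j‖ := by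
    refine sum_le_sum fun j hj ↦ ?_
    calc ∑ i ∈ C, ‖fuse C x i - fuse C x j‖ = #C * ‖C.centroid ℝ x - x j‖ := by
          rw [← nsmul_eq_mul, ← sum_const]
          exact sum_congr rfl fun i hi ↦ by rw [fuse_of_mem hi, fuse_of_notMem (mem_compl.1 hj)]
      _ ≤ ∑ i ∈ C, ‖x i - x j‖ := card_mul_norm_centroid_sub_le C x (x j)
  rw [sum_sum_eq_add_two_nsmul_add_compl C fun i j ↦ norm_sub_rev (x i) (x j),
    sum_sum_eq_add_two_nsmul_add_compl C
      fun i j ↦ norm_sub_rev (fuse C x i) (fuse C x j), hinside, houtside]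
  simp only [two_nsmul]
  linarith

lemma sum_norm_fuse_sub_sq_add [InnerProductSpace ℝ E] (x a : ι → E) :
    ∑ i, ‖fuse C x i - a i‖ ^ 2 + ∑ i ∈ C, ‖x i - C.centroid ℝ x‖ ^ 2 =
      ∑ i, ‖x i - a i‖ ^ 2 + 2 * ∑ i ∈ C, inner ℝ (x i - C.centroid ℝ x) (a i) := by
  have hinside : ∑ i ∈ C, ‖fuse C x i - a i‖ ^ 2 = ∑ i ∈ C, ‖C.centroid ℝ x - a i‖ ^ 2 :=
    sum_congr rfl fun i hi ↦ by rw [fuse_of_mem hi]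
  have houtside : ∑ i ∈ Cᶜ, ‖fuse C x i - a i‖ ^ 2 = ∑ i ∈ Cᶜ, ‖x i - a i‖ ^ 2 :=
    sum_congr rfl fun i hi ↦ by rw [fuse_of_notMem (mem_compl.1 hi)]
  rw [← sum_add_sum_compl C fun i ↦ ‖x i - a i‖ ^ 2,
    ← sum_add_sum_compl C fun i ↦ ‖fuse C x i - a i‖ ^ 2, hinside, houtside,
    sum_norm_sub_sq_eq_centroid C x a]
  ring

end Fuse

section Objective

variable {ι E : Type*} [Fintype ι]

/-- The sum-of-norms clustering objective for points of a normed group indexed by a finite type.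
The penalty runs over ordered pairs, hence the factor `lam / 2`; this needs no order on `ι`. -/
noncomputable def sumOfNormsObjective [SeminormedAddCommGroup E] (a : ι → E) (lam : ℝ)
    (x : ι → E) : ℝ :=
  (1 / 2) * ∑ i, ‖x i - a i‖ ^ 2 + (lam / 2) * ∑ i, ∑ j, ‖x i - x j‖

lemma sonObjective_eq_sumOfNormsObjective {d n : ℕ} (a : Fin n → EuclideanSpace ℝ (Fin d))
    (lam : ℝ) : sonObjective a lam = sumOfNormsObjective a lam := by
  funext x
  rw [sonObjective, sumOfNormsObjective, ← two_nsmul_sum_sum_ite_lt univ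
    (fun i j ↦ norm_sub_rev (x i) (x j)) fun i ↦ by rw [sub_self, norm_zero]]
  ring

lemma sumOfNormsObjective_fuse_add_le [DecidableEq ι] [SeminormedAddCommGroup E]
    [InnerProductSpace ℝ E] {a : ι → E} {lam : ℝ} (hlam : 0 ≤ lam) {C : Finset ι}
    (hdiam : ∀ i ∈ C, ∀ j ∈ C, ‖a i - a j‖ ≤ lam * #C) (x : ι → E) :
    sumOfNormsObjective a lam (fuse C x) + (1 / 2) * ∑ i ∈ C, ‖x i - C.centroid ℝ x‖ ^ 2 ≤
      sumOfNormsObjective a lam x := by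
  have hpenalty := mul_le_mul_of_nonneg_left (sum_sum_norm_fuse_sub_add_le C x) hlam
  have hfidelity := sum_norm_fuse_sub_sq_add C x a
  have hinner := two_mul_sum_inner_sub_centroid_le x hdiam
  unfold sumOfNormsObjective
  linarith

theorem diameter_criterion_general [NormedAddCommGroup E] [InnerProductSpace ℝ E] {a : ι → E}
    {lam : ℝ} {C : Finset ι} (hdiam : ∀ i ∈ C, ∀ j ∈ C, ‖a i - a j‖ ≤ lam * #C) {x : ι → E}
    (hx : ∀ y : ι → E, sumOfNormsObjective a lam x ≤ sumOfNormsObjective a lam y) :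
    ∀ i ∈ C, x i = C.centroid ℝ x := by
  classical
  intro i hi
  have hcard : (0 : ℝ) < #C := Nat.cast_pos.2 (card_pos.2 ⟨i, hi⟩)
  have hlam : 0 ≤ lam :=
    nonneg_of_mul_nonneg_left ((norm_nonneg _).trans (hdiam i hi i hi)) hcard
  have hspread : ∑ j ∈ C, ‖x j - C.centroid ℝ x‖ ^ 2 ≤ 0 := by
    linarith [hx (fuse C x), sumOfNormsObjective_fuse_add_le hlam hdiam x]
  have hsq : ‖x i - C.centroid ℝ x‖ ^ 2 ≤ 0 :=
    (single_le_sum (f := fun j ↦ ‖x j - C.centroid ℝ x‖ ^ 2)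
      (fun j _ ↦ sq_nonneg _) hi).trans hspread
  exact sub_eq_zero.1 (norm_eq_zero.1 (sq_nonpos_iff _ |>.1 hsq))

end Objective

/-- Diameter criterion: if `‖a i − a j‖ ≤ λ·|C|` for all `i, j ∈ C`, then all points of
`C` lie in the same cluster of the minimizer. -/
theorem diameter_criterion
    (d n : ℕ) (a : Fin n → EuclideanSpace ℝ (Fin d)) (lam : ℝ) (hlam : 0 < lam)
    (C : Finset (Fin n)) (hC : C.Nonempty)
    (hdiam : ∀ i ∈ C, ∀ j ∈ C, ‖a i - a j‖ ≤ lam * (C.card : ℝ))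
    (x : Fin n → EuclideanSpace ℝ (Fin d))
    (hx : ∀ y : Fin n → EuclideanSpace ℝ (Fin d), sonObjective a lam x ≤ sonObjective a lam y) :
    ∃ xhat : EuclideanSpace ℝ (Fin d), ∀ i ∈ C, x i = xhat := by
  rw [sonObjective_eq_sumOfNormsObjective] at hx
  exact ⟨C.centroid ℝ x, diameter_criterion_general hdiam hx⟩
end

section
/- (Separation criterion.) Let x* = (x_1*,…,x_n*) be the minimizer of the sum-of-norms clustering objective with points a_1,…,a_n ∈ ℝ^d and parameter λ ≥ 0. Then for any indices i, i′, one has ‖x_i* − x_{i′}*‖ ≥ ‖a_i − a_{i′}‖ − 2λ·(n − 1). In particular, if λ < ‖a_i − a_{i′}‖/(2(n − 1)) then x_i* ≠ x_{i′}*, i.e., i and i′ lie in different clusters. -/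
open Finset

/-!
Fix all coordinates of a minimizer `x` except `x k`. As a function of that coordinate the penalty
is Lipschitz, with constant `C` the total weight of the pairs containing `k`. If `x k` were
at distance `D > C` from `a k`, moving it along the segment towards `a k` until the distance is `C`
would decrease the quadratic term by `(D² - C²) / 2` and increase the penalty by at most
`C (D - C)`, for a net decrease of at least `(D - C)² / 2 > 0`. So `‖x k - a k‖ ≤ C` for every `k`,
and the triangle inequality compares `‖x i - x i'‖` with `‖a i - a i'‖`.
-/

-- For `c = 0` the hypothesis reads `a < 0`, because `b / 0 = 0`.
theorem mul_lt_of_nonneg_of_lt_div {K : Type*} [Field K] [LinearOrder K] [IsStrictOrderedRing K]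
    {a b c : K} (ha : 0 ≤ a) (hc : 0 ≤ c) (h : a < b / c) : a * c < b := by
  have hc_ne : c ≠ 0 := by
    rintro rfl
    exact (h.trans_eq (div_zero b)).not_ge ha
  exact (lt_div_iff₀ (hc.lt_of_ne' hc_ne)).1 h

section Prox

variable {E : Type*} [SeminormedAddCommGroup E] [NormedSpace ℝ E]

theorem exists_norm_sub_eq_and_norm_sub_eq_sub (a x : E) {r : ℝ} (hr : 0 ≤ r)
    (hrx : r ≤ ‖x - a‖) : ∃ z, ‖z - a‖ = r ∧ ‖z - x‖ = ‖x - a‖ - r := by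
  rcases (norm_nonneg (x - a)).eq_or_lt with hzero | hpos
  · exact ⟨x, by linarith, by rw [sub_self, norm_zero]; linarith⟩
  · have hratio : r / ‖x - a‖ ≤ 1 := (div_le_one hpos).2 hrx
    refine ⟨AffineMap.lineMap a x (r / ‖x - a‖), ?_, ?_⟩
    · rw [← dist_eq_norm, dist_lineMap_left, dist_comm a x, dist_eq_norm,
        Real.norm_of_nonneg (by positivity), div_mul_cancel₀ _ hpos.ne']
    · rw [← dist_eq_norm, dist_lineMap_right, dist_comm a x, dist_eq_norm,
        Real.norm_of_nonneg (sub_nonneg.2 hratio), sub_mul, one_mul, div_mul_cancel₀ _ hpos.ne']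

theorem norm_sub_le_of_forall_half_sq_add_le {g : E → ℝ} {a x : E} {C : ℝ} (hC : 0 ≤ C)
    (hg : ∀ z, g z ≤ g x + C * ‖z - x‖)
    (hx : ∀ z, 1 / 2 * ‖x - a‖ ^ 2 + g x ≤ 1 / 2 * ‖z - a‖ ^ 2 + g z) : ‖x - a‖ ≤ C := by
  by_contra! hlt
  obtain ⟨z, hza, hzx⟩ := exists_norm_sub_eq_and_norm_sub_eq_sub a x hC hlt.le
  have hmin := hx z
  have hlip := hg z
  rw [hza] at hmin
  rw [hzx] at hlip
  have hgain : 0 < (‖x - a‖ - C) ^ 2 := pow_pos (sub_pos.2 hlt) 2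
  linarith

end Prox

section Weighted

variable {ι E : Type*} [Fintype ι] [SeminormedAddCommGroup E]

/-- The fusion penalty of convex clustering with a weight `w i j` for each ordered pair; an
unordered pair `{i, j}` thus has total weight `w i j + w j i`. -/
noncomputable def fusionPenalty (w : ι → ι → ℝ) (x : ι → E) : ℝ :=
  ∑ i, ∑ j, w i j * ‖x i - x j‖

/-- The objective of convex clustering with pairwise weights, of which `sonObjective` is the case
of equal weights. -/
noncomputable def weightedSonObjective (a : ι → E) (w : ι → ι → ℝ) (x : ι → E) : ℝ :=
  1 / 2 * ∑ i, ‖x i - a i‖ ^ 2 + fusionPenalty w x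

/-- The total weight of the ordered pairs containing `k`, which bounds how far the penalty can pull
the `k`-th point. The diagonal weight `w k k`, irrelevant for the penalty, is counted twice. -/
def weightDegree (w : ι → ι → ℝ) (k : ι) : ℝ :=
  ∑ j, (w k j + w j k)

theorem weightDegree_nonneg {w : ι → ι → ℝ} (hw : ∀ i j, 0 ≤ w i j) (k : ι) :
    0 ≤ weightDegree w k :=
  sum_nonneg fun j _ => add_nonneg (hw k j) (hw j k)

theorem sum_sum_mul_add_eq_sum_weightDegree_mul (w : ι → ι → ℝ) (r : ι → ℝ) :
    ∑ i, ∑ j, w i j * (r i + r j) = ∑ k, weightDegree w k * r k := by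
  simp only [weightDegree, mul_add, add_mul, sum_mul, sum_add_distrib]
  rw [sum_comm (f := fun i j => w i j * r j)]

theorem fusionPenalty_le_add_sum_weightDegree_mul {w : ι → ι → ℝ} (hw : ∀ i j, 0 ≤ w i j)
    (x y : ι → E) :
    fusionPenalty w y ≤ fusionPenalty w x + ∑ k, weightDegree w k * ‖y k - x k‖ := by
  have hpair (i j : ι) : ‖y i - y j‖ ≤ ‖x i - x j‖ + (‖y i - x i‖ + ‖y j - x j‖) :=
    calc ‖y i - y j‖ = ‖(x i - x j) + ((y i - x i) - (y j - x j))‖ := by congr 1; abel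
      _ ≤ ‖x i - x j‖ + (‖y i - x i‖ + ‖y j - x j‖) :=
        norm_add_le_of_le le_rfl (norm_sub_le _ _)
  rw [← sum_sum_mul_add_eq_sum_weightDegree_mul w fun k => ‖y k - x k‖]
  simp only [fusionPenalty, ← sum_add_distrib, ← mul_add]
  gcongr with i _ j _
  · exact hw i j
  · exact hpair i j

theorem fusionPenalty_update_le [DecidableEq ι] {w : ι → ι → ℝ} (hw : ∀ i j, 0 ≤ w i j)
    (x : ι → E) (k : ι) (z : E) :
    fusionPenalty w (Function.update x k z) ≤
      fusionPenalty w x + weightDegree w k * ‖z - x k‖ := by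
  have hsum : ∑ i, weightDegree w i * ‖Function.update x k z i - x i‖ =
      weightDegree w k * ‖z - x k‖ := by
    rw [Fintype.sum_eq_single k fun i hi => by simp [hi], Function.update_self]
  exact hsum ▸ fusionPenalty_le_add_sum_weightDegree_mul hw x _

theorem weightedSonObjective_update [DecidableEq ι] (a : ι → E) (w : ι → ι → ℝ) (x : ι → E)
    (k : ι) (z : E) :
    weightedSonObjective a w (Function.update x k z) =
      1 / 2 * ‖z - a k‖ ^ 2 + fusionPenalty w (Function.update x k z) +
        1 / 2 * ∑ i ∈ univ.erase k, ‖x i - a i‖ ^ 2 := by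
  have hrest : ∑ i ∈ univ.erase k, ‖Function.update x k z i - a i‖ ^ 2 =
      ∑ i ∈ univ.erase k, ‖x i - a i‖ ^ 2 :=
    sum_congr rfl fun i hi => by rw [Function.update_of_ne (ne_of_mem_erase hi)]
  rw [weightedSonObjective, ← add_sum_erase _ _ (mem_univ k), hrest, Function.update_self]
  ring

variable [NormedSpace ℝ E]

theorem norm_sub_le_weightDegree {a x : ι → E} {w : ι → ι → ℝ} (hw : ∀ i j, 0 ≤ w i j)
    (hx : ∀ y, weightedSonObjective a w x ≤ weightedSonObjective a w y) (k : ι) :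
    ‖x k - a k‖ ≤ weightDegree w k := by
  classical
  let penalty (z : E) : ℝ := fusionPenalty w (Function.update x k z)
  have hself : penalty (x k) = fusionPenalty w x := by simp only [penalty, Function.update_eq_self]
  refine norm_sub_le_of_forall_half_sq_add_le (g := penalty) (weightDegree_nonneg hw k)
    (fun z => hself ▸ fusionPenalty_update_le hw x k z) fun z => ?_
  have hmin : weightedSonObjective a w (Function.update x k (x k)) ≤
      weightedSonObjective a w (Function.update x k z) := by
    simpa only [Function.update_eq_self] using hx (Function.update x k z)
  rw [weightedSonObjective_update, weightedSonObjective_update] at hmin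
  exact le_of_add_le_add_right hmin

theorem separation_criterion_general {a x : ι → E} {w : ι → ι → ℝ} (hw : ∀ i j, 0 ≤ w i j)
    (hx : ∀ y, weightedSonObjective a w x ≤ weightedSonObjective a w y) (i i' : ι) :
    ‖a i - a i'‖ - (weightDegree w i + weightDegree w i') ≤ ‖x i - x i'‖ ∧
      (weightDegree w i + weightDegree w i' < ‖a i - a i'‖ → x i ≠ x i') := by
  have hsep : ‖a i - a i'‖ - (weightDegree w i + weightDegree w i') ≤ ‖x i - x i'‖ := by
    have htriangle := dist_triangle4 (a i) (x i) (x i') (a i')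
    rw [dist_comm (a i) (x i)] at htriangle
    simp only [dist_eq_norm] at htriangle
    linarith [norm_sub_le_weightDegree hw hx i, norm_sub_le_weightDegree hw hx i']
  refine ⟨hsep, fun hlt heq => ?_⟩
  rw [heq, sub_self, norm_zero] at hsep
  linarith

end Weighted

section OrderedPairs

/-- The weights giving every unordered pair of distinct indices the total weight `lam`, placed on
the ordered pair `(i, j)` with `i < j`. -/
def orderedPairWeight {ι : Type*} [LinearOrder ι] (lam : ℝ) (i j : ι) : ℝ :=
  if i < j then lam else 0

theorem orderedPairWeight_nonneg {ι : Type*} [LinearOrder ι] {lam : ℝ} (hlam : 0 ≤ lam)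
    (i j : ι) : 0 ≤ orderedPairWeight lam i j :=
  ite_nonneg hlam le_rfl

theorem weightDegree_orderedPairWeight {ι : Type*} [Fintype ι] [LinearOrder ι] (lam : ℝ) (k : ι) :
    weightDegree (orderedPairWeight lam) k = lam * ((Fintype.card ι : ℝ) - 1) := by
  have hpair (j : ι) : orderedPairWeight lam k j + orderedPairWeight lam j k =
      lam - if j = k then lam else 0 := by
    rcases lt_trichotomy j k with h | h | h
    · simp [orderedPairWeight, h, h.ne, h.not_gt]
    · simp [orderedPairWeight, h]
    · simp [orderedPairWeight, h, h.ne', h.not_gt]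
  simp only [weightDegree, hpair, sum_sub_distrib, sum_const, card_univ, sum_ite_eq', mem_univ,
    if_true, nsmul_eq_mul]
  ring

theorem sonObjective_eq_weightedSonObjective {d n : ℕ} (a : Fin n → EuclideanSpace ℝ (Fin d))
    (lam : ℝ) : sonObjective a lam = weightedSonObjective a (orderedPairWeight lam) := by
  ext x
  simp only [sonObjective, weightedSonObjective, fusionPenalty, orderedPairWeight, mul_sum,
    mul_ite, ite_mul, mul_zero, zero_mul]

end OrderedPairs

/-- Separation criterion: `‖x i − x i′‖ ≥ ‖a i − a i′‖ − 2λ(n−1)`; in particular, if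
`λ < ‖a i − a i′‖/(2(n−1))` then `i` and `i′` lie in different clusters. -/
theorem separation_criterion
    (d n : ℕ) (a : Fin n → EuclideanSpace ℝ (Fin d)) (lam : ℝ) (hlam : 0 ≤ lam)
    (x : Fin n → EuclideanSpace ℝ (Fin d))
    (hx : ∀ y : Fin n → EuclideanSpace ℝ (Fin d), sonObjective a lam x ≤ sonObjective a lam y)
    (i i' : Fin n) :
    ‖a i - a i'‖ - 2 * lam * ((n : ℝ) - 1) ≤ ‖x i - x i'‖ ∧
    (lam < ‖a i - a i'‖ / (2 * ((n : ℝ) - 1)) → x i ≠ x i') := by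
  have hn : (1 : ℝ) ≤ n := by exact_mod_cast i.pos
  rw [sonObjective_eq_weightedSonObjective] at hx
  obtain ⟨hsep, hne⟩ := separation_criterion_general (orderedPairWeight_nonneg hlam) hx i i'
  simp only [weightDegree_orderedPairWeight, Fintype.card_fin] at hsep hne
  refine ⟨by linarith, fun hlt => hne ?_⟩
  linarith [mul_lt_of_nonneg_of_lt_div hlam (by linarith) hlt]
end
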